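/- For every nonempty 𝒮, every probability distribution P on 𝒳, and every ε∈(0,1), limsup_{n→∞} −(1/n)·log₂ β_n(ε) ≤ inf_Q I[X;B]_{P,Q}, where the infimum is over all finitely supported probability distributions Q on 𝒮. -/

import Mathlib

open Filter
open scoped ComplexOrder

noncomputable section

/-- A density matrix: positive semidefinite with unit trace. -/
def IsDensity {m : Type*} [Fintype m] (ρ : Matrix m m ℂ) : Prop :=
  ρ.PosSemidef ∧ ρ.trace = 1

/-- Loewner order `A ⪯ B`. -/
def Loewner {m : Type*} [Fintype m] (A B : Matrix m m ℂ) : Prop :=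
  (B - A).PosSemidef

/-- Functional calculus for Hermitian matrices (junk value `0` on non-Hermitian input). -/
def matFun {m : Type*} [Fintype m] [DecidableEq m] (f : ℝ → ℝ) (A : Matrix m m ℂ) :
    Matrix m m ℂ :=
  if hA : A.IsHermitian then
    (hA.eigenvectorUnitary : Matrix m m ℂ) *
        Matrix.diagonal (fun i => (f (hA.eigenvalues i) : ℂ)) *
      star (hA.eigenvectorUnitary : Matrix m m ℂ)
  else 0

/-- Base-2 matrix logarithm, taken on the support. -/
def mlog2 {m : Type*} [Fintype m] [DecidableEq m] (A : Matrix m m ℂ) : Matrix m m ℂ :=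
  matFun (fun u => if u ≤ 0 then 0 else Real.logb 2 u) A

/-- Quantum relative entropy `D(ρ‖σ) = Tr[ρ(log₂ρ − log₂σ)]` (logarithms on supports). -/
def relEnt {m : Type*} [Fintype m] [DecidableEq m] (ρ σ : Matrix m m ℂ) : ℝ :=
  (Matrix.trace (ρ * (mlog2 ρ - mlog2 σ))).re

/-- The classical–quantum state `Σ_x w(x) |x⟩⟨x| ⊗ ρ_x`. -/
def cqState {X B : Type*} [DecidableEq X] (w : X → ℝ) (ρ : X → Matrix B B ℂ) :
    Matrix (X × B) (X × B) ℂ :=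
  Matrix.of fun p q => (if p.1 = q.1 then ((w p.1 : ℝ) : ℂ) else 0) * ρ p.1 p.2 q.2

/-- Tensor product of a finite family of matrices, realized on functions. -/
def tensorFam {k d : Type*} [Fintype k] (ρ : k → Matrix d d ℂ) :
    Matrix (k → d) (k → d) ℂ :=
  Matrix.of fun i j => ∏ a, ρ a (i a) (j a)

/-- Finitely supported probability distributions on `𝒮`. -/
abbrev FinProb (𝒮 : Type*) : Type _ :=
  {Q : 𝒮 →₀ ℝ // (∀ s, 0 ≤ Q s) ∧ Q.sum (fun _ a => a) = 1}

/-- Assumption A. -/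
def AssumptionA {𝒳 𝒮 : Type*} {d : ℕ} (ρ : 𝒳 → 𝒮 → Matrix (Fin d) (Fin d) ℂ) : Prop :=
  ∀ ε : ℝ, 0 < ε → ∃ Sε : Finset 𝒮, ∀ s : 𝒮, ∃ s' ∈ Sε, ∀ x : 𝒳,
    Loewner (ρ x s) ((1 + ε) • ρ x s')

/-- The mutual information `I[X;B]_{P,Q}`. -/
def mutInfI {𝒳 𝒮 : Type*} [Fintype 𝒳] [DecidableEq 𝒳] {d : ℕ}
    (ρ : 𝒳 → 𝒮 → Matrix (Fin d) (Fin d) ℂ) (P : 𝒳 → ℝ) (Q : 𝒮 →₀ ℝ) : ℝ :=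
  relEnt (cqState P (fun x => Q.sum fun s w => w • ρ x s))
    (cqState P (fun _ => ∑ x, P x • (Q.sum fun s w => w • ρ x s)))

/-- The optimal type-II error `β_n(ε)` of the universal independence test. -/
def betaN {𝒳 𝒮 : Type*} [Fintype 𝒳] [DecidableEq 𝒳] {d : ℕ}
    (ρ : 𝒳 → 𝒮 → Matrix (Fin d) (Fin d) ℂ) (P : 𝒳 → ℝ) (ε : ℝ) (n : ℕ) : ℝ :=
  sInf { v : ℝ |
    ∃ T : Matrix ((Fin n → 𝒳) × (Fin n → Fin d)) ((Fin n → 𝒳) × (Fin n → Fin d)) ℂ,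
      T.PosSemidef ∧ (1 - T).PosSemidef ∧
      (∀ sv : Fin n → 𝒮,
        (Matrix.trace ((1 - T) *
          cqState (fun xv : Fin n → 𝒳 => ∏ k, P (xv k))
            (fun xv => tensorFam fun k => ρ (xv k) (sv k)))).re ≤ ε) ∧
      v = ⨆ σ : {σ : Matrix (Fin n → Fin d) (Fin n → Fin d) ℂ // IsDensity σ},
        (Matrix.trace (T * cqState (fun xv : Fin n → 𝒳 => ∏ k, P (xv k)) (fun _ => σ.1))).re }


open Matrix in
lemma sc_trace_mul_nonneg {m : Type*} [Fintype m] {A B : Matrix m m ℂ}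
    (hA : A.PosSemidef) (hB : B.PosSemidef) : 0 ≤ (Matrix.trace (A * B)).re := by
  classical
  obtain ⟨C, rfl⟩ : ∃ C : Matrix m m ℂ, A = Cᴴ * C := by
    open scoped MatrixOrder in
    obtain ⟨C, hC⟩ := CStarAlgebra.nonneg_iff_eq_star_mul_self.mp hA.nonneg
    exact ⟨C, hC⟩
  rw [Matrix.trace_mul_cycle, Matrix.trace_mul_cycle]
  have := (hB.mul_mul_conjTranspose_same C).trace_nonneg
  exact (Complex.le_def.mp this).1

open Matrix in
lemma sc_oneshot {m : Type*} [Fintype m] [DecidableEq m] {R S A T Pi : Matrix m m ℂ}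
    {t r η ε : ℝ} (hr : 0 ≤ r) (ht : 0 ≤ t)
    (hT : T.PosSemidef) (hT1 : (1 - T).PosSemidef)
    (hA : A.PosSemidef) (hAR : (R - A).PosSemidef) (hAt : ((t : ℂ) • (1 : Matrix m m ℂ) - A).PosSemidef)
    (hPi : Pi.IsHermitian) (hPi2 : Pi * Pi = Pi) (hS : (S - (r : ℂ) • Pi).PosSemidef)
    (h1 : (Matrix.trace (R - A)).re ≤ η) (h2 : (Matrix.trace ((1 - Pi) * R)).re ≤ η)
    (h3 : (Matrix.trace R).re = 1)
    (h4 : (Matrix.trace ((1 - T) * R)).re ≤ ε) :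
    r * (1 - ε - 3 * η) ≤ 2 * t * (Matrix.trace (T * S)).re := by
  have hP' : (1 - Pi).IsHermitian := Matrix.isHermitian_one.sub hPi
  have hP2' : (1 - Pi) * (1 - Pi) = 1 - Pi := by
    simp [mul_sub, sub_mul, hPi2]
  have hPp : Pi.PosSemidef := by
    have := Matrix.posSemidef_self_mul_conjTranspose Pi
    rwa [hPi.eq, hPi2] at this
  have hPp' : (1 - Pi).PosSemidef := by
    have := Matrix.posSemidef_self_mul_conjTranspose (1 - Pi)
    rwa [hP'.eq, hP2'] at this
  have e1 := sc_trace_mul_nonneg hT hS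
  have e2 := sc_trace_mul_nonneg hT1 hAR
  have e2' := sc_trace_mul_nonneg hT hAR
  have hPTP : (Pi * T * Pi).PosSemidef := by
    have := hT.mul_mul_conjTranspose_same Pi
    rwa [hPi.eq] at this
  have e3 := sc_trace_mul_nonneg hPTP hAt
  have hU : ((Pi - (1 - Pi)) * A * (Pi - (1 - Pi))).PosSemidef := by
    have := hA.mul_mul_conjTranspose_same (Pi - (1 - Pi))
    rwa [(hPi.sub hP').eq] at this
  have e4 := sc_trace_mul_nonneg hT hU
  have hQA : ((1 - Pi) * A * (1 - Pi)).PosSemidef := by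
    have := hA.mul_mul_conjTranspose_same (1 - Pi)
    rwa [hP'.eq] at this
  have e5 := sc_trace_mul_nonneg hT1 hQA
  have e6 := sc_trace_mul_nonneg hPp' hAR
  have d1 : Matrix.trace (T * ((Pi - (1 - Pi)) * A * (Pi - (1 - Pi)))) =
      2 * Matrix.trace (T * (Pi * A * Pi)) + 2 * Matrix.trace (T * ((1 - Pi) * A * (1 - Pi)))
        - Matrix.trace (T * A) := by
    have : T * ((Pi - (1 - Pi)) * A * (Pi - (1 - Pi))) =
      (2 : ℂ) • (T * (Pi * A * Pi)) + (2 : ℂ) • (T * ((1 - Pi) * A * (1 - Pi))) - T * A := by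
      rw [two_smul, two_smul]; noncomm_ring
    rw [this, Matrix.trace_sub, Matrix.trace_add, Matrix.trace_smul, Matrix.trace_smul]
    simp
  have d2 : Matrix.trace ((1 - Pi) * A * (1 - Pi)) = Matrix.trace ((1 - Pi) * A) := by
    rw [Matrix.trace_mul_comm, ← mul_assoc, hP2']
  have d3 : Matrix.trace (Pi * T * Pi * ((t : ℂ) • (1 : Matrix m m ℂ) - A)) =
      t * Matrix.trace (T * Pi) - Matrix.trace (T * (Pi * A * Pi)) := by
    have a1 : Matrix.trace (Pi * T * Pi) = Matrix.trace (T * Pi) := by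
      rw [Matrix.trace_mul_comm, ← mul_assoc, hPi2, Matrix.trace_mul_comm]
    have a2 : Matrix.trace (Pi * T * Pi * A) = Matrix.trace (T * (Pi * A * Pi)) := by
      rw [mul_assoc, mul_assoc, Matrix.trace_mul_comm]; simp only [mul_assoc]
    rw [mul_sub, Matrix.trace_sub, a2, mul_smul_comm, Matrix.trace_smul, mul_one, a1, smul_eq_mul]
  rw [d1] at e4
  rw [sub_mul, one_mul, Matrix.trace_sub, d2] at e5
  rw [d3] at e3
  rw [mul_sub, Matrix.trace_sub] at e6 e2'
  rw [mul_sub, Matrix.trace_sub, mul_smul_comm, Matrix.trace_smul] at e1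
  rw [sub_mul, one_mul, Matrix.trace_sub] at h4
  rw [mul_sub, Matrix.trace_sub, sub_mul, sub_mul, one_mul, one_mul, Matrix.trace_sub, Matrix.trace_sub] at e2
  rw [Matrix.trace_sub] at h1
  simp only [Complex.sub_re, Complex.add_re, Complex.mul_re, smul_eq_mul, Complex.ofReal_re,
    Complex.ofReal_im, Complex.re_ofNat, Complex.im_ofNat, zero_mul, sub_zero] at *
  have k1 : 1 - ε - 3 * η ≤ 2 * t * (Matrix.trace (T * Pi)).re := by linarith
  calc r * (1 - ε - 3 * η) ≤ r * (2 * t * (Matrix.trace (T * Pi)).re) :=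
        mul_le_mul_of_nonneg_left k1 hr
    _ = 2 * t * (r * (Matrix.trace (T * Pi)).re) := by ring
    _ ≤ _ := mul_le_mul_of_nonneg_left (by linarith) (by linarith)

lemma sc_chernoff {m : Type*} [Fintype m] (w g : m → ℝ) (hw : ∀ i, 0 ≤ w i)
    (hw1 : ∑ i, w i = 1) (hg : ∑ i, w i * g i = 0) {δ : ℝ} (hδ : 0 < δ) :
    ∃ c : ℝ, 0 ≤ c ∧ c < 1 ∧ ∀ n : ℕ,
      ∑ j : Fin n → m, (if (n : ℝ) * δ < ∑ k, g (j k) then ∏ k, w (j k) else 0) ≤ c ^ n := by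
  classical
  set K : ℝ := 1 + ∑ i, |g i| with hK
  have hK1 : 1 ≤ K := by
    have : 0 ≤ ∑ i, |g i| := Finset.sum_nonneg fun i _ => abs_nonneg _
    linarith
  have hgK : ∀ i, |g i| ≤ K := fun i => by
    have := Finset.single_le_sum (f := fun i => |g i|) (fun i _ => abs_nonneg _) (Finset.mem_univ i)
    linarith
  set θ : ℝ := min (1 / K) (δ / (2 * K ^ 2)) with hθ
  have hθ0 : 0 < θ := lt_min (by positivity) (by positivity)
  have hθ1 : θ * K ≤ 1 := by
    have := min_le_left (1 / K) (δ / (2 * K ^ 2))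
    rw [← hθ, le_div_iff₀ (by positivity)] at this
    exact this
  have hθ2 : θ * (2 * K ^ 2) ≤ δ := by
    have := min_le_right (1 / K) (δ / (2 * K ^ 2))
    rw [← hθ, le_div_iff₀ (by positivity)] at this
    exact this
  have hM : ∑ i, w i * Real.exp (θ * g i) ≤ Real.exp (θ * δ / 2) := by
    have h1 : ∀ i, w i * Real.exp (θ * g i) ≤ w i + θ * (w i * g i) + w i * (θ ^ 2 * K ^ 2) := by
      intro i
      have hx : |θ * g i| ≤ 1 := by
        rw [abs_mul, abs_of_pos hθ0]
        exact le_trans (mul_le_mul_of_nonneg_left (hgK i) hθ0.le) hθ1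
      have h2 := (abs_le.mp (Real.abs_exp_sub_one_sub_id_le hx)).2
      have h3 : (θ * g i) ^ 2 ≤ θ ^ 2 * K ^ 2 := by
        rw [mul_pow]
        refine mul_le_mul_of_nonneg_left ?_ (by positivity)
        rw [← sq_abs]
        exact pow_le_pow_left₀ (abs_nonneg _) (hgK i) 2
      have h4 : Real.exp (θ * g i) ≤ 1 + θ * g i + θ ^ 2 * K ^ 2 := by linarith
      calc _ ≤ w i * (1 + θ * g i + θ ^ 2 * K ^ 2) := mul_le_mul_of_nonneg_left h4 (hw i)
        _ = _ := by ring
    calc _ ≤ ∑ i, (w i + θ * (w i * g i) + w i * (θ ^ 2 * K ^ 2)) :=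
          Finset.sum_le_sum fun i _ => h1 i
      _ = 1 + θ ^ 2 * K ^ 2 := by
          rw [Finset.sum_add_distrib, Finset.sum_add_distrib, ← Finset.mul_sum, ← Finset.sum_mul,
            hw1, hg]; ring
      _ ≤ θ * δ / 2 + 1 := by nlinarith
      _ ≤ _ := Real.add_one_le_exp _
  refine ⟨Real.exp (-(θ * δ / 2)), (Real.exp_pos _).le, ?_, fun n => ?_⟩
  · rw [Real.exp_lt_one_iff]; have := mul_pos hθ0 hδ; linarith
  calc _ ≤ ∑ j : Fin n → m, Real.exp (-(θ * δ)) ^ n * ∏ k, (w (j k) * Real.exp (θ * g (j k))) := by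
        refine Finset.sum_le_sum fun j _ => ?_
        have hp : 0 ≤ ∏ k, w (j k) := Finset.prod_nonneg fun k _ => hw _
        rw [Finset.prod_mul_distrib, ← Real.exp_sum, ← Real.exp_nat_mul, ← Finset.mul_sum,
          mul_left_comm, ← Real.exp_add]
        split_ifs with h
        · refine le_mul_of_one_le_right hp (Real.one_le_exp ?_)
          have := mul_lt_mul_of_pos_left h hθ0
          nlinarith
        · positivity
    _ = Real.exp (-(θ * δ)) ^ n * (∑ i, w i * Real.exp (θ * g i)) ^ n := by
        rw [← Finset.mul_sum, Fintype.sum_pow]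
    _ ≤ Real.exp (-(θ * δ)) ^ n * (Real.exp (θ * δ / 2)) ^ n := by
        gcongr
        exact Finset.sum_nonneg fun i _ => mul_nonneg (hw i) (Real.exp_pos _).le
    _ = _ := by rw [← mul_pow, ← Real.exp_add]; congr 2; ring

open Matrix in
lemma sc_tensor_mul {k d : Type*} [Fintype k] [DecidableEq k] [Fintype d]
    (A B : k → Matrix d d ℂ) :
    tensorFam (fun a => A a * B a) = tensorFam A * tensorFam B := by
  ext i j
  simp only [tensorFam, Matrix.of_apply, Matrix.mul_apply]
  rw [Fintype.prod_sum]
  simp only [Finset.prod_mul_distrib]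

open Matrix in
lemma sc_tensor_conj {k d : Type*} [Fintype k] (A : k → Matrix d d ℂ) :
    tensorFam (fun a => (A a)ᴴ) = (tensorFam A)ᴴ := by
  ext i j
  simp [tensorFam, Matrix.conjTranspose_apply]

open Matrix in
lemma sc_tensor_diag {k d : Type*} [Fintype k] [DecidableEq d]
    (f : k → d → ℂ) :
    tensorFam (fun a => Matrix.diagonal (f a)) = Matrix.diagonal (fun i => ∏ a, f a (i a)) := by
  ext i j
  simp only [tensorFam, Matrix.of_apply, Matrix.diagonal_apply]
  by_cases h : i = j
  · subst h; simp
  · rw [if_neg h]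
    obtain ⟨a, ha⟩ := Function.ne_iff.mp h
    exact Finset.prod_eq_zero (Finset.mem_univ a) (if_neg ha)

open Matrix in
lemma sc_tensor_one {k d : Type*} [Fintype k] [DecidableEq d] :
    tensorFam (fun _ : k => (1 : Matrix d d ℂ)) = 1 := by
  have := sc_tensor_diag (k := k) (fun _ (_ : d) => (1 : ℂ))
  simpa using this

open Matrix in
lemma sc_conj_trace {m : Type*} [Fintype m] [DecidableEq m] (U : Matrix m m ℂ)
    (f : m → ℂ) (A : Matrix m m ℂ) :
    Matrix.trace ((U * Matrix.diagonal f * Uᴴ) * A) = ∑ i, f i * (Uᴴ * A * U) i i := by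
  rw [Matrix.mul_assoc, Matrix.mul_assoc, Matrix.trace_mul_comm, Matrix.mul_assoc, Matrix.trace]
  simp [Matrix.diagonal_mul]

open Matrix in
lemma sc_conj_psd {m : Type*} [Fintype m] [DecidableEq m] (U : Matrix m m ℂ)
    (f : m → ℝ) (hf : ∀ i, 0 ≤ f i) :
    (U * Matrix.diagonal (fun i => (f i : ℂ)) * Uᴴ).PosSemidef := by
  refine Matrix.PosSemidef.mul_mul_conjTranspose_same ?_ U
  refine Matrix.PosSemidef.diagonal fun i => ?_
  simpa using hf i

/-- logarithm with the convention at nonpositive numbers -/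
def scl (u : ℝ) : ℝ := if u ≤ 0 then 0 else Real.logb 2 u

open Matrix in
lemma sc_spectral {m : Type*} [Fintype m] [DecidableEq m] {A : Matrix m m ℂ} (hA : A.PosSemidef) :
    ∃ (U : Matrix m m ℂ) (p : m → ℝ), Uᴴ * U = 1 ∧ U * Uᴴ = 1 ∧ (∀ i, 0 ≤ p i) ∧
      A = U * Matrix.diagonal (fun i => (p i : ℂ)) * Uᴴ ∧
      mlog2 A = U * Matrix.diagonal (fun i => (scl (p i) : ℂ)) * Uᴴ := by
  refine ⟨hA.1.eigenvectorUnitary, hA.1.eigenvalues, ?_, ?_, hA.eigenvalues_nonneg, ?_, ?_⟩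
  · exact Unitary.coe_star_mul_self _
  · exact Unitary.coe_mul_star_self _
  · exact hA.1.spectral_theorem
  · rw [mlog2, matFun, dif_pos hA.1]; rfl

lemma sc_scl_prod {ι : Type*} [Fintype ι] (p : ι → ℝ) (hp : ∀ i, 0 < p i) :
    ∏ i, p i = (2 : ℝ) ^ (∑ i, scl (p i)) := by
  rw [← Real.rpow_logb (b := 2) (x := ∏ i, p i) (by norm_num) (by norm_num)
    (Finset.prod_pos fun i _ => hp i), Real.logb_prod _ _ fun i _ => (hp i).ne']
  congr 1
  exact Finset.sum_congr rfl fun i _ => by simp [scl, not_le.mpr (hp i)]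

open Matrix in
/-- strong converse of the quantum Stein lemma -/
lemma sc_stein {m : Type*} [Fintype m] [DecidableEq m] {ρ σ : Matrix m m ℂ}
    (hρ : ρ.PosSemidef) (hρ1 : ρ.trace = 1) (hσ : σ.PosSemidef)
    (hsupp : ∀ v : m → ℂ, star v ⬝ᵥ (σ *ᵥ v) = 0 → star v ⬝ᵥ (ρ *ᵥ v) = 0)
    {ε δ : ℝ} (hε : ε < 1) (hδ : 0 < δ) :
    ∀ᶠ n : ℕ in atTop, ∀ T : Matrix (Fin n → m) (Fin n → m) ℂ, T.PosSemidef →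
      (1 - T).PosSemidef →
      (Matrix.trace ((1 - T) * tensorFam (fun _ : Fin n => ρ))).re ≤ ε →
      (2 : ℝ) ^ (-(n : ℝ) * (relEnt ρ σ + 2 * δ)) * ((1 - ε) / 4) ≤
        (Matrix.trace (T * tensorFam (fun _ : Fin n => σ))).re := by
  obtain ⟨U, p, hU1, hU2, hp0, hρe, hρl⟩ := sc_spectral hρ
  obtain ⟨V, q, hV1, hV2, hq0, hσe, hσl⟩ := sc_spectral hσ
  have hwpsd : (Vᴴ * ρ * V).PosSemidef := hρ.conjTranspose_mul_mul_same V
  obtain ⟨w, hw⟩ : ∃ w : m → ℝ, ∀ i, (Vᴴ * ρ * V) i i = w i := by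
    refine ⟨fun i => ((Vᴴ * ρ * V) i i).re, fun i => ?_⟩
    have := hwpsd.1.apply i i
    exact (Complex.conj_eq_iff_re.mp this).symm
  have hw0 : ∀ i, 0 ≤ w i := fun i => by
    have := hwpsd.diag_nonneg (i := i)
    rw [hw] at this
    exact_mod_cast this
  have hw1 : ∑ i, w i = 1 := by
    have : Matrix.trace (Vᴴ * ρ * V) = 1 := by
      rw [Matrix.trace_mul_comm, ← mul_assoc, hV2, one_mul, hρ1]
    simp only [Matrix.trace, Matrix.diag, hw] at this
    exact_mod_cast this
  have hp1 : ∑ i, p i = 1 := by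
    have : Matrix.trace ρ = ∑ i, (p i : ℂ) := by
      rw [hρe, Matrix.trace_mul_comm, ← mul_assoc, hU1, one_mul]
      simp [Matrix.trace]
    rw [hρ1] at this
    exact_mod_cast this.symm
  have hwq : ∀ i, q i = 0 → w i = 0 := by
    intro i hi
    have key : ∀ (M : Matrix m m ℂ), star (fun a => V a i) ⬝ᵥ (M *ᵥ (fun a => V a i))
        = (Vᴴ * M * V) i i := by
      intro M
      rw [mul_assoc]
      simp only [dotProduct, Matrix.mulVec, Matrix.mul_apply, Matrix.conjTranspose_apply, Pi.star_apply]
    have h1 := hsupp (fun a => V a i) (by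
      rw [key, hσe]
      have : Vᴴ * (V * Matrix.diagonal (fun i => (q i : ℂ)) * Vᴴ) * V
        = (Vᴴ * V) * Matrix.diagonal (fun i => (q i : ℂ)) * (Vᴴ * V) := by noncomm_ring
      rw [this, hV1]
      simp [hi])
    rw [key, hw] at h1
    exact_mod_cast h1
  have hD : relEnt ρ σ = ∑ i, p i * scl (p i) - ∑ i, w i * scl (q i) := by
    have a1 : Matrix.trace (ρ * mlog2 ρ) = ∑ i, (p i * scl (p i) : ℂ) := by
      rw [Matrix.trace_mul_comm, hρl, sc_conj_trace]
      refine Finset.sum_congr rfl fun i _ => ?_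
      have : Uᴴ * ρ * U = Matrix.diagonal (fun i => (p i : ℂ)) := by
        conv_lhs => rw [hρe]
        have : Uᴴ * (U * Matrix.diagonal (fun i => (p i : ℂ)) * Uᴴ) * U
          = (Uᴴ * U) * Matrix.diagonal (fun i => (p i : ℂ)) * (Uᴴ * U) := by noncomm_ring
        rw [this, hU1]; simp
      rw [this]; simp [mul_comm]
    have a2 : Matrix.trace (ρ * mlog2 σ) = ∑ i, (w i * scl (q i) : ℂ) := by
      rw [Matrix.trace_mul_comm, hσl, sc_conj_trace]
      refine Finset.sum_congr rfl fun i _ => ?_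
      rw [hw, mul_comm]
    rw [relEnt, mul_sub, Matrix.trace_sub, a1, a2]
    have : (∑ i, (p i * scl (p i) : ℂ) - ∑ i, (w i * scl (q i) : ℂ)) =
      ((∑ i, p i * scl (p i) - ∑ i, w i * scl (q i) : ℝ) : ℂ) := by push_cast; rfl
    rw [this, Complex.ofReal_re]
  set a := ∑ i, p i * scl (p i) with ha
  set b := ∑ i, w i * scl (q i) with hb
  obtain ⟨c₁, hc₁0, hc₁1, hc₁⟩ := sc_chernoff p (fun i => scl (p i) - a) hp0 hp1
    (by simp only [mul_sub, Finset.sum_sub_distrib, ← Finset.sum_mul, hp1]; rw [← ha]; ring) hδ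
  obtain ⟨c₂, hc₂0, hc₂1, hc₂⟩ := sc_chernoff w (fun i => b - scl (q i)) hw0 hw1
    (by simp only [mul_sub, Finset.sum_sub_distrib, ← Finset.sum_mul, hw1]; rw [← hb]; ring) hδ
  have hη : 0 < (1 - ε) / 6 := by linarith
  have l1 := (tendsto_pow_atTop_nhds_zero_of_lt_one hc₁0 hc₁1).eventually (gt_mem_nhds hη)
  have l2 := (tendsto_pow_atTop_nhds_zero_of_lt_one hc₂0 hc₂1).eventually (gt_mem_nhds hη)
  filter_upwards [l1, l2] with n hn1 hn2 T hT hT1 hTε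
  set W := tensorFam (fun _ : Fin n => U) with hWdef
  set Y := tensorFam (fun _ : Fin n => V) with hYdef
  have hW1 : Wᴴ * W = 1 := by
    rw [hWdef, ← sc_tensor_conj, ← sc_tensor_mul]; simp only [hU1]; exact sc_tensor_one
  have hW2 : W * Wᴴ = 1 := by
    rw [hWdef, ← sc_tensor_conj, ← sc_tensor_mul]; simp only [hU2]; exact sc_tensor_one
  have hY1 : Yᴴ * Y = 1 := by
    rw [hYdef, ← sc_tensor_conj, ← sc_tensor_mul]; simp only [hV1]; exact sc_tensor_one
  have hY2 : Y * Yᴴ = 1 := by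
    rw [hYdef, ← sc_tensor_conj, ← sc_tensor_mul]; simp only [hV2]; exact sc_tensor_one
  have hR : tensorFam (fun _ : Fin n => ρ) =
      W * Matrix.diagonal (fun i => ((∏ k, p (i k) : ℝ) : ℂ)) * Wᴴ := by
    conv_lhs => rw [hρe]
    rw [sc_tensor_mul, sc_tensor_mul, sc_tensor_diag, sc_tensor_conj]
    simp only [Complex.ofReal_prod]; rfl
  have hS : tensorFam (fun _ : Fin n => σ) =
      Y * Matrix.diagonal (fun i => ((∏ k, q (i k) : ℝ) : ℂ)) * Yᴴ := by
    conv_lhs => rw [hσe]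
    rw [sc_tensor_mul, sc_tensor_mul, sc_tensor_diag, sc_tensor_conj]
    simp only [Complex.ofReal_prod]; rfl
  have hYR : ∀ i, (Yᴴ * tensorFam (fun _ : Fin n => ρ) * Y) i i = ((∏ k, w (i k) : ℝ) : ℂ) := by
    intro i
    rw [hYdef, ← sc_tensor_conj, ← sc_tensor_mul, ← sc_tensor_mul]
    simp only [tensorFam, Matrix.of_apply, hw, Complex.ofReal_prod]
  set t : ℝ := (2 : ℝ) ^ ((n : ℝ) * (a + δ)) with ht
  set r : ℝ := (2 : ℝ) ^ ((n : ℝ) * (b - δ)) with hr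
  have ht0 : 0 < t := Real.rpow_pos_of_pos (by norm_num) _
  have hr0 : 0 < r := Real.rpow_pos_of_pos (by norm_num) _
  have hpp : ∀ i : Fin n → m, 0 ≤ ∏ k, p (i k) := fun i => Finset.prod_nonneg fun k _ => hp0 _
  have hqp : ∀ i : Fin n → m, 0 ≤ ∏ k, q (i k) := fun i => Finset.prod_nonneg fun k _ => hq0 _
  have diff : ∀ (Z : Matrix (Fin n → m) (Fin n → m) ℂ) (f g : (Fin n → m) → ℝ),
      Z * Matrix.diagonal (fun i => (f i : ℂ)) * Zᴴ - Z * Matrix.diagonal (fun i => (g i : ℂ)) * Zᴴ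
      = Z * Matrix.diagonal (fun i => ((f i - g i : ℝ) : ℂ)) * Zᴴ := by
    intro Z f g
    rw [← sub_mul, ← mul_sub, Matrix.diagonal_sub]
    simp only [Complex.ofReal_sub]
  have scal : ∀ (Z : Matrix (Fin n → m) (Fin n → m) ℂ) (x : ℝ) (g : (Fin n → m) → ℝ),
      (x : ℂ) • (Z * Matrix.diagonal (fun i => (g i : ℂ)) * Zᴴ)
      = Z * Matrix.diagonal (fun i => ((x * g i : ℝ) : ℂ)) * Zᴴ := by
    intro Z x g
    rw [← smul_mul_assoc, ← mul_smul_comm, ← Matrix.diagonal_smul]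
    congr 3
    ext i; simp
  have one_eq : ∀ (Z : Matrix (Fin n → m) (Fin n → m) ℂ), Z * Zᴴ = 1 →
      (1 : Matrix (Fin n → m) (Fin n → m) ℂ) = Z * Matrix.diagonal (fun _ => ((1 : ℝ) : ℂ)) * Zᴴ := by
    intro Z hZ; simp [hZ]
  set A := W * Matrix.diagonal (fun i => ((if ∏ k, p (i k) ≤ t then ∏ k, p (i k) else 0 : ℝ) : ℂ)) * Wᴴ
    with hAdef
  set Pj := Y * Matrix.diagonal (fun i => ((if r ≤ ∏ k, q (i k) then 1 else 0 : ℝ) : ℂ)) * Yᴴ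
    with hPdef
  have hApsd : A.PosSemidef := sc_conj_psd W _ fun i => by split_ifs; exacts [hpp i, le_rfl]
  have hPpsd : Pj.PosSemidef := sc_conj_psd Y _ fun i => by split_ifs <;> norm_num
  have hPP : Pj * Pj = Pj := by
    have : Pj * Pj = Y * (Matrix.diagonal (fun i => ((if r ≤ ∏ k, q (i k) then 1 else 0 : ℝ) : ℂ)) *
        (Yᴴ * Y) * Matrix.diagonal (fun i => ((if r ≤ ∏ k, q (i k) then 1 else 0 : ℝ) : ℂ))) * Yᴴ := by
      rw [hPdef]; noncomm_ring
    rw [this, hY1, mul_one, Matrix.diagonal_mul_diagonal, hPdef]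
    congr 3
    ext i; split_ifs <;> simp
  have hAR : (tensorFam (fun _ : Fin n => ρ) - A).PosSemidef := by
    rw [hR, hAdef, diff]
    refine sc_conj_psd W _ fun i => ?_
    split_ifs
    · simp
    · simpa using hpp i
  have hAt : ((t : ℂ) • (1 : Matrix (Fin n → m) (Fin n → m) ℂ) - A).PosSemidef := by
    rw [one_eq W hW2, scal, hAdef, diff]
    refine sc_conj_psd W _ fun i => ?_
    split_ifs with h
    · linarith
    · linarith
  have hSP : (tensorFam (fun _ : Fin n => σ) - (r : ℂ) • Pj).PosSemidef := by
    rw [hS, hPdef, scal, diff]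
    refine sc_conj_psd Y _ fun i => ?_
    split_ifs with h
    · linarith
    · simpa using hqp i
  have b1 : (Matrix.trace (tensorFam (fun _ : Fin n => ρ) - A)).re ≤ (1 - ε) / 6 := by
    rw [hR, hAdef, diff, Matrix.trace_mul_comm, ← mul_assoc, hW1, one_mul, Matrix.trace_diagonal,
      ← Complex.ofReal_sum, Complex.ofReal_re]
    refine le_trans (le_trans (Finset.sum_le_sum fun i _ => ?_) (hc₁ n)) hn1.le
    by_cases h : ∏ k, p (i k) ≤ t
    · rw [if_pos h, sub_self]; split_ifs; exacts [hpp i, le_rfl]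
    · rw [if_neg h, sub_zero]
      push Not at h
      have hpos : ∀ k, 0 < p (i k) := fun k => lt_of_le_of_ne (hp0 _) fun h0 => by
        rw [Finset.prod_eq_zero (Finset.mem_univ k) h0.symm] at h
        linarith
      rw [sc_scl_prod _ hpos, ht, Real.rpow_lt_rpow_left_iff (by norm_num)] at h
      rw [if_pos]
      simp only [Finset.sum_sub_distrib, Finset.sum_const, Finset.card_univ, Fintype.card_fin, nsmul_eq_mul]
      linarith
  have b2 : (Matrix.trace ((1 - Pj) * tensorFam (fun _ : Fin n => ρ))).re ≤ (1 - ε) / 6 := by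
    rw [one_eq Y hY2, hPdef, diff, sc_conj_trace]
    simp only [hYR, ← Complex.ofReal_mul]
    rw [← Complex.ofReal_sum, Complex.ofReal_re]
    refine le_trans (le_trans (Finset.sum_le_sum fun i _ => ?_) (hc₂ n)) hn2.le
    have hwp : 0 ≤ ∏ k, w (i k) := Finset.prod_nonneg fun k _ => hw0 _
    by_cases h : r ≤ ∏ k, q (i k)
    · rw [if_pos h, sub_self, zero_mul]; split_ifs; exacts [hwp, le_rfl]
    · rw [if_neg h, sub_zero, one_mul]
      push Not at h
      by_cases hz : ∃ k, q (i k) = 0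
      · obtain ⟨k, hk⟩ := hz
        rw [Finset.prod_eq_zero (Finset.mem_univ k) (hwq _ hk)]
        split_ifs <;> exact le_rfl
      push Not at hz
      have hpos : ∀ k, 0 < q (i k) := fun k => lt_of_le_of_ne (hq0 _) (hz k).symm
      rw [sc_scl_prod _ hpos, hr, Real.rpow_lt_rpow_left_iff (by norm_num)] at h
      rw [if_pos]
      simp only [Finset.sum_sub_distrib, Finset.sum_const, Finset.card_univ, Fintype.card_fin, nsmul_eq_mul]
      linarith
  have b3 : (Matrix.trace (tensorFam (fun _ : Fin n => ρ))).re = 1 := by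
    rw [hR, Matrix.trace_mul_comm, ← mul_assoc, hW1, one_mul, Matrix.trace_diagonal,
      ← Complex.ofReal_sum, Complex.ofReal_re, ← Fintype.sum_pow, hp1, one_pow]
  have fin := sc_oneshot hr0.le ht0.le hT hT1 hApsd hAR hAt hPpsd.1 hPP hSP b1 b2 b3 hTε
  have e : (2 : ℝ) ^ (-(n : ℝ) * (relEnt ρ σ + 2 * δ)) = r / t := by
    rw [hr, ht, ← Real.rpow_sub (by norm_num), hD]; congr 1; ring
  rw [e, div_mul_eq_mul_div, div_le_iff₀ ht0]
  linarith

open Matrix in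
lemma sc_cq_quad {X B : Type*} [Fintype X] [DecidableEq X] [Fintype B]
    (w : X → ℝ) (ρ : X → Matrix B B ℂ) (v : X × B → ℂ) :
    star v ⬝ᵥ (cqState w ρ *ᵥ v) =
      ∑ x, (w x : ℂ) * (star (fun b => v (x, b)) ⬝ᵥ (ρ x *ᵥ (fun b => v (x, b)))) := by
  simp only [dotProduct, Matrix.mulVec, cqState, Matrix.of_apply, Fintype.sum_prod_type,
    Pi.star_apply]
  refine Finset.sum_congr rfl fun x _ => ?_
  rw [Finset.mul_sum]
  refine Finset.sum_congr rfl fun b _ => ?_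
  rw [Finset.sum_eq_single x]
  · simp only [if_true]
    rw [Finset.mul_sum, Finset.mul_sum, Finset.mul_sum]
    exact Finset.sum_congr rfl fun c _ => by ring
  · intro y _ hy
    simp [Ne.symm hy]
  · simp

open Matrix in
lemma sc_cq_psd {X B : Type*} [Fintype X] [DecidableEq X] [Fintype B]
    (w : X → ℝ) (hw : ∀ x, 0 ≤ w x) (ρ : X → Matrix B B ℂ) (hρ : ∀ x, (ρ x).PosSemidef) :
    (cqState w ρ).PosSemidef := by
  refine Matrix.PosSemidef.of_dotProduct_mulVec_nonneg ?_ fun v => ?_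
  · ext p q
    simp only [cqState, Matrix.conjTranspose_apply, Matrix.of_apply]
    by_cases h : p.1 = q.1
    · rw [if_pos h, if_pos h.symm, ← h]
      simp [(hρ p.1).1.apply p.2 q.2]
    · rw [if_neg h, if_neg (Ne.symm h)]; simp
  · rw [sc_cq_quad]
    exact Finset.sum_nonneg fun x _ => mul_nonneg (by exact_mod_cast hw x)
      ((hρ x).dotProduct_mulVec_nonneg _)

lemma sc_cq_trace {X B : Type*} [Fintype X] [DecidableEq X] [Fintype B]
    (w : X → ℝ) (hw : ∑ x, w x = 1) (ρ : X → Matrix B B ℂ) (hρ : ∀ x, (ρ x).trace = 1) :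
    (cqState w ρ).trace = 1 := by
  have : (cqState w ρ).trace = ∑ x, (w x : ℂ) * (ρ x).trace := by
    simp [Matrix.trace, cqState, Fintype.sum_prod_type, Finset.mul_sum]
  rw [this]
  simp only [hρ, mul_one]
  exact_mod_cast hw

open Matrix in
lemma sc_tensor_density {k d : Type*} [Fintype k] [DecidableEq k] [Fintype d] [DecidableEq d]
    {ρ : k → Matrix d d ℂ} (hρ : ∀ a, IsDensity (ρ a)) : IsDensity (tensorFam ρ) := by
  constructor
  · choose U p _ _ hp hρe _ using fun a => sc_spectral (hρ a).1
    have : tensorFam ρ = tensorFam U * Matrix.diagonal (fun i => ((∏ a, p a (i a) : ℝ) : ℂ)) *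
        (tensorFam U)ᴴ := by
      rw [show ρ = fun a => U a * Matrix.diagonal (fun i => (p a i : ℂ)) * (U a)ᴴ from funext hρe]
      rw [sc_tensor_mul, sc_tensor_mul, sc_tensor_diag, sc_tensor_conj]
      simp only [Complex.ofReal_prod]
    rw [this]
    exact sc_conj_psd _ _ fun i => Finset.prod_nonneg fun a _ => hp a _
  · have : (tensorFam ρ).trace = ∏ a, (ρ a).trace := by
      simp only [Matrix.trace, Matrix.diag, tensorFam, Matrix.of_apply]
      rw [Fintype.prod_sum]
    rw [this]
    exact Finset.prod_eq_one fun a _ => (hρ a).2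

lemma sc_density_sum {ι m : Type*} [Fintype m] (s : Finset ι) (w : ι → ℝ)
    (hw : ∀ i ∈ s, 0 ≤ w i) (hw1 : ∑ i ∈ s, w i = 1) (ρ : ι → Matrix m m ℂ)
    (hρ : ∀ i, IsDensity (ρ i)) : IsDensity (∑ i ∈ s, w i • ρ i) := by
  constructor
  · refine Matrix.posSemidef_sum s fun i hi => ?_
    have := (hρ i).1.smul (α := ℂ) (a := (w i : ℂ)) (by exact_mod_cast hw i hi)
    simpa using this
  · rw [Matrix.trace_sum]
    simp only [Matrix.trace_smul, (hρ _).2]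
    have : ∑ i ∈ s, w i • (1 : ℂ) = ((∑ i ∈ s, w i : ℝ) : ℂ) := by simp
    rw [this, hw1]; simp

lemma sc_cq_tensor {X B : Type*} [DecidableEq X] {n : ℕ} (P : X → ℝ)
    (τ : X → Matrix B B ℂ) :
    (cqState (fun xv : Fin n → X => ∏ k, P (xv k))
      (fun xv => tensorFam fun k => τ (xv k))).submatrix
        (Equiv.arrowProdEquivProdArrow (Fin n) (fun _ => X) (fun _ => B))
        (Equiv.arrowProdEquivProdArrow (Fin n) (fun _ => X) (fun _ => B)) =
      tensorFam (fun _ : Fin n => cqState P τ) := by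
  ext i j
  simp only [Matrix.submatrix_apply, cqState, tensorFam, Matrix.of_apply,
    Equiv.arrowProdEquivProdArrow, Equiv.coe_fn_mk, Finset.prod_mul_distrib]
  congr 1
  by_cases h : (fun c => (i c).1) = fun c => (j c).1
  · rw [if_pos h]
    have h' : ∀ c, (i c).1 = (j c).1 := fun c => congrFun h c
    simp [h']
  · rw [if_neg h]
    obtain ⟨c, hc⟩ := Function.ne_iff.mp h
    exact (Finset.prod_eq_zero (Finset.mem_univ c) (if_neg hc)).symm

lemma sc_trace_submatrix {m m' : Type*} [Fintype m] [Fintype m'] (e : m' ≃ m)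
    (A B : Matrix m m ℂ) :
    Matrix.trace (A.submatrix e e * B.submatrix e e) = Matrix.trace (A * B) := by
  rw [Matrix.submatrix_mul_equiv]
  simp only [Matrix.trace, Matrix.diag, Matrix.submatrix_apply]
  exact Equiv.sum_comp e (fun i => (A * B) i i)

/-- averaging over state sequences -/
lemma sc_average {X S B : Type*} [DecidableEq X] [DecidableEq S] {n : ℕ} (w : (Fin n → X) → ℝ)
    (s : Finset S) (Q : S → ℝ) (ρ : X → S → Matrix B B ℂ) :
    cqState w (fun xv => tensorFam fun k => ∑ a ∈ s, Q a • ρ (xv k) a) =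
      ∑ sv ∈ Fintype.piFinset (fun _ : Fin n => s), ((∏ k, Q (sv k) : ℝ) : ℂ) •
        cqState w (fun xv => tensorFam fun k => ρ (xv k) (sv k)) := by
  ext p q
  simp only [cqState, tensorFam, Matrix.of_apply, Matrix.sum_apply, Matrix.smul_apply,
    smul_eq_mul, Complex.real_smul]
  rw [Finset.prod_univ_sum, Finset.mul_sum]
  refine Finset.sum_congr rfl fun sv _ => ?_
  rw [Finset.prod_mul_distrib, Complex.ofReal_prod]
  ring

open Matrix in
lemma sc_beta_lower {𝒳 𝒮 : Type*} [Fintype 𝒳] [DecidableEq 𝒳] {d : ℕ}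
    (ρ : 𝒳 → 𝒮 → Matrix (Fin d) (Fin d) ℂ)
    (hρ : ∀ x s, IsDensity (ρ x s))
    (P : 𝒳 → ℝ) (hP0 : ∀ x, 0 ≤ P x) (hP1 : ∑ x, P x = 1)
    (ε : ℝ) (hε : ε ∈ Set.Ioo (0 : ℝ) 1) (Q : FinProb 𝒮) {δ : ℝ} (hδ : 0 < δ) :
    ∀ᶠ n : ℕ in atTop,
      (2 : ℝ) ^ (-(n : ℝ) * (mutInfI ρ P Q.1 + 2 * δ)) * ((1 - ε) / 4) ≤ betaN ρ P ε n := by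
  classical
  obtain ⟨Q, hQ0, hQ1⟩ := Q
  have hτ : ∀ x, IsDensity (∑ s ∈ Q.support, Q s • ρ x s) := fun x =>
    sc_density_sum _ _ (fun s _ => hQ0 s) hQ1 _ (hρ x)
  set τ : 𝒳 → Matrix (Fin d) (Fin d) ℂ := fun x => ∑ s ∈ Q.support, Q s • ρ x s with hτdef
  have hB : IsDensity (∑ x, P x • τ x) :=
    sc_density_sum _ _ (fun x _ => hP0 x) hP1 _ hτ
  set σB := ∑ x, P x • τ x with hσB
  have hmut : mutInfI ρ P Q = relEnt (cqState P τ) (cqState P (fun _ => σB)) := rfl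
  have st := sc_stein (ρ := cqState P τ) (σ := cqState P (fun _ => σB)) (ε := ε) (δ := δ)
    (sc_cq_psd _ hP0 _ fun x => (hτ x).1) (sc_cq_trace _ hP1 _ fun x => (hτ x).2)
    (sc_cq_psd _ hP0 _ fun _ => hB.1) (by
      intro v hv
      rw [sc_cq_quad] at hv ⊢
      refine Finset.sum_eq_zero fun x _ => ?_
      have h1 := (Finset.sum_eq_zero_iff_of_nonneg (fun x _ => mul_nonneg
        (by exact_mod_cast hP0 x) (hB.1.dotProduct_mulVec_nonneg _))).mp hv x (Finset.mem_univ x)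
      rcases mul_eq_zero.mp h1 with h | h
      · rw [h, zero_mul]
      · have h2 : ∀ u : Fin d → ℂ, star u ⬝ᵥ (σB *ᵥ u) = ∑ y, (P y : ℂ) * (star u ⬝ᵥ (τ y *ᵥ u)) := by
          intro u
          rw [hσB, Matrix.sum_mulVec, dotProduct_sum]
          refine Finset.sum_congr rfl fun y _ => ?_
          rw [Matrix.smul_mulVec, dotProduct_smul, Complex.real_smul]
        rw [h2] at h
        exact (Finset.sum_eq_zero_iff_of_nonneg (fun y _ => mul_nonneg
          (by exact_mod_cast hP0 y) ((hτ y).1.dotProduct_mulVec_nonneg _))).mp h x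
            (Finset.mem_univ x)) hε.2 hδ
  filter_upwards [st] with n hn
  have hPn0 : ∀ xv : Fin n → 𝒳, 0 ≤ ∏ k, P (xv k) := fun xv => Finset.prod_nonneg fun k _ => hP0 _
  have hPn1 : ∑ xv : Fin n → 𝒳, ∏ k, P (xv k) = 1 := by
    rw [← Fintype.sum_pow, hP1, one_pow]
  refine le_csInf ?_ ?_
  · refine ⟨_, 1, Matrix.PosSemidef.one, by rw [sub_self]; exact Matrix.PosSemidef.zero, ?_, rfl⟩
    intro sv
    simpa using hε.1.le
  rintro v ⟨T, hT, hT1, hTs, rfl⟩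
  set e := Equiv.arrowProdEquivProdArrow (Fin n) (fun _ => 𝒳) (fun _ => Fin d) with he
  have hsub : (1 : Matrix _ _ ℂ) - T.submatrix e e = (1 - T).submatrix e e := by
    rw [← Matrix.submatrix_one_equiv e]; rfl
  have key := hn (T.submatrix e e) (hT.submatrix e) (by
    rw [hsub]; exact hT1.submatrix e) (by
    rw [← sc_cq_tensor, hsub, sc_trace_submatrix, hτdef, sc_average, Finset.mul_sum, Matrix.trace_sum, Complex.re_sum]
    calc _ = ∑ sv ∈ Fintype.piFinset (fun _ : Fin n => Q.support), (∏ k, Q (sv k)) *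
          (Matrix.trace ((1 - T) * cqState (fun xv : Fin n → 𝒳 => ∏ k, P (xv k))
            (fun xv => tensorFam fun k => ρ (xv k) (sv k)))).re := by
          refine Finset.sum_congr rfl fun sv _ => ?_
          rw [mul_smul_comm, Matrix.trace_smul, smul_eq_mul, Complex.re_ofReal_mul]
      _ ≤ ∑ sv ∈ Fintype.piFinset (fun _ : Fin n => Q.support), (∏ k, Q (sv k)) * ε :=
          Finset.sum_le_sum fun sv _ => mul_le_mul_of_nonneg_left (hTs sv)
            (Finset.prod_nonneg fun k _ => hQ0 _)
      _ = ε := by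
          rw [← Finset.sum_mul, ← Finset.prod_univ_sum (fun _ : Fin n => Q.support) (fun _ s => Q s)]
          have : ∑ s ∈ Q.support, Q s = 1 := hQ1
          simp [this])
  rw [← sc_cq_tensor, sc_trace_submatrix] at key
  rw [hmut]
  refine key.trans ?_
  refine le_ciSup (f := fun σ : {σ : Matrix (Fin n → Fin d) (Fin n → Fin d) ℂ // IsDensity σ} =>
    (Matrix.trace (T * cqState (fun xv : Fin n → 𝒳 => ∏ k, P (xv k)) (fun _ => σ.1))).re) ?_
    ⟨tensorFam fun _ => σB, sc_tensor_density fun _ => hB⟩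
  refine ⟨1, ?_⟩
  rintro _ ⟨σ, rfl⟩
  have h1 := sc_trace_mul_nonneg hT1 (sc_cq_psd (fun xv : Fin n → 𝒳 => ∏ k, P (xv k)) hPn0
    (fun _ => σ.1) fun _ => σ.2.1)
  rw [sub_mul, one_mul, Matrix.trace_sub, sc_cq_trace _ hPn1 _ fun _ => σ.2.2] at h1
  simp only [Complex.sub_re, Complex.one_re] at h1
  simp only
  linarith

lemma sc_beta_bounds {𝒳 𝒮 : Type*} [Fintype 𝒳] [DecidableEq 𝒳] {d : ℕ}
    (ρ : 𝒳 → 𝒮 → Matrix (Fin d) (Fin d) ℂ)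
    (P : 𝒳 → ℝ) (hP0 : ∀ x, 0 ≤ P x) (hP1 : ∑ x, P x = 1)
    (ε : ℝ) (hε : ε ∈ Set.Ioo (0 : ℝ) 1) (n : ℕ) :
    0 ≤ betaN ρ P ε n ∧ betaN ρ P ε n ≤ 1 := by
  have hPn0 : ∀ xv : Fin n → 𝒳, 0 ≤ ∏ k, P (xv k) := fun xv => Finset.prod_nonneg fun k _ => hP0 _
  have hPn1 : ∑ xv : Fin n → 𝒳, ∏ k, P (xv k) = 1 := by
    rw [← Fintype.sum_pow, hP1, one_pow]
  have hnn : ∀ (T : Matrix ((Fin n → 𝒳) × (Fin n → Fin d)) ((Fin n → 𝒳) × (Fin n → Fin d)) ℂ),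
      T.PosSemidef → 0 ≤ ⨆ σ : {σ : Matrix (Fin n → Fin d) (Fin n → Fin d) ℂ // IsDensity σ},
        (Matrix.trace (T * cqState (fun xv : Fin n → 𝒳 => ∏ k, P (xv k)) (fun _ => σ.1))).re :=
    fun T hT => Real.iSup_nonneg fun σ => sc_trace_mul_nonneg hT (sc_cq_psd _ hPn0 _ fun _ => σ.2.1)
  constructor
  · refine Real.sInf_nonneg ?_
    rintro v ⟨T, hT, -, -, rfl⟩
    exact hnn T hT
  · refine le_trans (csInf_le ⟨0, ?_⟩ ⟨1, Matrix.PosSemidef.one,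
      by rw [sub_self]; exact Matrix.PosSemidef.zero, ?_, rfl⟩) ?_
    · rintro v ⟨T, hT, -, -, rfl⟩
      exact hnn T hT
    · intro sv
      simpa using hε.1.le
    · refine Real.iSup_le (fun σ => ?_) zero_le_one
      rw [one_mul, sc_cq_trace _ hPn1 _ fun _ => σ.2.2]
      simp

/-- strong converse direction. For every nonempty `𝒮`, every probability
distribution `P` on `𝒳`, and every `ε ∈ (0,1)`,
`limsup_{n→∞} −(1/n) log₂ β_n(ε) ≤ inf_Q I[X;B]_{P,Q}`, the infimum over finitely supported
probability distributions `Q` on `𝒮`. -/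
theorem statement2 {𝒳 𝒮 : Type*} [Fintype 𝒳] [DecidableEq 𝒳] [Nonempty 𝒮] {d : ℕ}
    (ρ : 𝒳 → 𝒮 → Matrix (Fin d) (Fin d) ℂ)
    (hρ : ∀ x s, IsDensity (ρ x s))
    (P : 𝒳 → ℝ) (hP0 : ∀ x, 0 ≤ P x) (hP1 : ∑ x, P x = 1)
    (ε : ℝ) (hε : ε ∈ Set.Ioo (0 : ℝ) 1) :
    Filter.limsup (fun n : ℕ => -(1 / (n : ℝ)) * Real.logb 2 (betaN ρ P ε n)) atTop ≤
      ⨅ Q : FinProb 𝒮, mutInfI ρ P Q.1 := by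
  have : Nonempty (FinProb 𝒮) := by
    obtain ⟨s⟩ := ‹Nonempty 𝒮›
    classical
    refine ⟨⟨Finsupp.single s 1, fun t => ?_, by simp⟩⟩
    rw [Finsupp.single_apply]; split_ifs <;> norm_num
  refine le_ciInf fun Q => ?_
  refine le_of_forall_pos_le_add fun δ' hδ' => ?_
  have hδ : 0 < δ' / 3 := by linarith
  have hc : 0 < (1 - ε) / 4 := by have := hε.2; linarith
  refine limsup_le_of_le ?_ ?_
  · refine IsBoundedUnder.isCoboundedUnder_le ⟨0, ?_⟩
    refine Filter.eventually_map.mpr (Filter.Eventually.of_forall fun n => ?_)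
    have hb := sc_beta_bounds ρ P hP0 hP1 ε hε n
    have h1 : Real.logb 2 (betaN ρ P ε n) ≤ 0 :=
      Real.logb_nonpos (by norm_num) hb.1 hb.2
    have h2 : (0 : ℝ) ≤ 1 / (n : ℝ) := by positivity
    show 0 ≤ -(1 / (n : ℝ)) * Real.logb 2 (betaN ρ P ε n)
    nlinarith
  · have hlim : Tendsto (fun n : ℕ => -Real.logb 2 ((1 - ε) / 4) / (n : ℝ)) atTop (nhds 0) :=
      tendsto_const_div_atTop_nhds_zero_nat _
    filter_upwards [sc_beta_lower ρ hρ P hP0 hP1 ε hε Q hδ, eventually_gt_atTop 0,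
      hlim.eventually (gt_mem_nhds hδ)] with n hn hn0 hnl
    have hn0' : (0 : ℝ) < n := by exact_mod_cast hn0
    have hpow : (0 : ℝ) < (2 : ℝ) ^ (-(n : ℝ) * (mutInfI ρ P Q.1 + 2 * (δ' / 3))) :=
      Real.rpow_pos_of_pos (by norm_num) _
    have h1 := Real.logb_le_logb_of_le (b := 2) (by norm_num) (mul_pos hpow hc) hn
    rw [Real.logb_mul hpow.ne' hc.ne', Real.logb_rpow (by norm_num) (by norm_num)] at h1
    rw [div_lt_iff₀ hn0'] at hnl
    have h3 : -(1 / (n : ℝ)) * Real.logb 2 (betaN ρ P ε n) =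
        (-Real.logb 2 (betaN ρ P ε n)) / n := by ring
    rw [h3, div_le_iff₀ hn0']
    nlinarith
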